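/- Let α ∈ (1,2) and let f, g ∈ L^α(S, μ) be nonzero and satisfy Assumptions (A1) and (A2) with constants ε₁, ε₂. Let b ≥ 1, β ∈ (0, α/2), and define F(u) := |u|^{−β} for |u| < 1/b and F(u) := b^{β−1}|u|^{−1} for |u| ≥ 1/b. Then ∫_ℝ ∫_ℝ |D₁(u,v)| F(u) du dv ≤ C b^{β−1} log(b+1) ([g,f]₁* + [f,g]₂) and ∫_ℝ ∫_ℝ |D₂(u,v)| F(u)F(v) du dv ≤ C b^{2β−α} ([f,g]₁ + [f,g]₂), where the constant C depends only on α, β, ε₁, ε₂, ‖f‖_α and ‖g‖_α. (Paper's Lemma 3.5.) -/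

import Mathlib

open MeasureTheory Real Set Filter
open scoped ENNReal Topology

noncomputable def nrm (α : ℝ) {S : Type*} [MeasurableSpace S] (μ : Measure S) (f : S → ℝ) : ℝ :=
  (∫ s, |f s| ^ α ∂μ) ^ (1 / α)

noncomputable def dep2 (α : ℝ) {S : Type*} [MeasurableSpace S] (μ : Measure S) (f g : S → ℝ) : ℝ :=
  ∫ s, |f s * g s| ^ (α / 2) ∂μ

noncomputable def dep1s (α : ℝ) {S : Type*} [MeasurableSpace S] (μ : Measure S) (f g : S → ℝ) : ℝ :=
  ∫ s, |f s| ^ (α - 1) * |g s| ∂μ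

noncomputable def dep1 (α : ℝ) {S : Type*} [MeasurableSpace S] (μ : Measure S) (f g : S → ℝ) : ℝ :=
  dep1s α μ f g + dep1s α μ g f

/-- `f ∈ L^α(S, μ)`. -/
def MemLalpha (α : ℝ) {S : Type*} [MeasurableSpace S] (μ : Measure S) (f : S → ℝ) : Prop :=
  AEStronglyMeasurable f μ ∧ Integrable (fun s => |f s| ^ α) μ

/-- Assumption (A1) with constant ε₁. -/
def A1 (α ε₁ : ℝ) {S : Type*} [MeasurableSpace S] (μ : Measure S) (f g : S → ℝ) : Prop :=
  nrm α μ f ^ (α / 2) * nrm α μ g ^ (α / 2) - dep2 α μ f g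
    ≥ ε₁ * (nrm α μ f ^ (α / 2) * nrm α μ g ^ (α / 2))

/-- Assumption (A2) with constant ε₂. -/
def A2 (α ε₂ : ℝ) {S : Type*} [MeasurableSpace S] (μ : Measure S) (f g : S → ℝ) : Prop :=
  ∀ u v : ℝ, nrm α μ (fun s => u * f s + v * g s) ^ α
    ≥ ε₂ * (|u| ^ α * nrm α μ f ^ α + |v| ^ α * nrm α μ g ^ α)

noncomputable def Ufun (α : ℝ) {S : Type*} [MeasurableSpace S] (μ : Measure S)
    (f g : S → ℝ) (u v : ℝ) : ℝ :=
  Real.exp (-(nrm α μ (fun s => u * f s + v * g s) ^ α)) -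
    Real.exp (-(nrm α μ (fun s => u * f s) ^ α) - nrm α μ (fun s => v * g s) ^ α)

/-- signed power `a^⟨p⟩ = sign(a)|a|^p`. -/
noncomputable def spow (a p : ℝ) : ℝ := Real.sign a * |a| ^ p

noncomputable def D1 (α : ℝ) {S : Type*} [MeasurableSpace S] (μ : Measure S)
    (f g : S → ℝ) (u v : ℝ) : ℝ :=
  -α * (∫ s, spow (u * f s + v * g s) (α - 1) * f s ∂μ) *
      Real.exp (-(nrm α μ (fun s => u * f s + v * g s) ^ α)) +
    α * (∫ s, spow (u * f s) (α - 1) * f s ∂μ) *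
      Real.exp (-(nrm α μ (fun s => u * f s) ^ α) - nrm α μ (fun s => v * g s) ^ α)

noncomputable def D2 (α : ℝ) {S : Type*} [MeasurableSpace S] (μ : Measure S)
    (f g : S → ℝ) (u v : ℝ) : ℝ :=
  -(α * (α - 1)) * (∫ s, (if f s = 0 ∨ g s = 0 then (0:ℝ) else
        |u * f s + v * g s| ^ (α - 2) * (f s * g s)) ∂μ) *
      Real.exp (-(nrm α μ (fun s => u * f s + v * g s) ^ α)) +
    α ^ 2 * (∫ s, spow (u * f s + v * g s) (α - 1) * f s ∂μ) *
      (∫ s, spow (u * f s + v * g s) (α - 1) * g s ∂μ) *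
      Real.exp (-(nrm α μ (fun s => u * f s + v * g s) ^ α)) -
    α ^ 2 * (∫ s, spow (u * f s) (α - 1) * f s ∂μ) *
      (∫ s, spow (v * g s) (α - 1) * g s ∂μ) *
      Real.exp (-(nrm α μ (fun s => u * f s) ^ α) - nrm α μ (fun s => v * g s) ^ α)

/-- `(ξ, η)` is jointly SαS with spectral pair `(f, g)`. -/
def JointSAS (α : ℝ) {S : Type*} [MeasurableSpace S] (μ : Measure S) (f g : S → ℝ)
    {Ω : Type*} [MeasurableSpace Ω] (P : Measure Ω) (ξ η : Ω → ℝ) : Prop :=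
  ∀ u v : ℝ, (∫ ω, Complex.exp (Complex.I * ((u * ξ ω + v * η ω : ℝ) : ℂ)) ∂P)
    = Complex.exp (-((nrm α μ (fun s => u * f s + v * g s) ^ α : ℝ) : ℂ))

/-!
Both derivatives are differences between an expression at `(u f, v g)` and its decoupled version, so
they are controlled by the dependence functionals times a polynomial in `(1 + |u|) (1 + |v|)` times
`exp (-c (|u|^α + |v|^α))`, the exponential decay being assumption (A2). The one exception is the
integral of `|u f + v g|^(α - 2) f g` in `D2`, which is not bounded in `(u, v)`. Against the weight
in `v`, which is at most `b^(β - α/2) |v|^(-α/2)`, scaling `v ↦ (u f / g) v` turns it pointwise in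
`s` into a constant times `|u|^(α/2 - 1) |f g|^(α/2)`, and the weight in `u` then contributes the
second factor `b^(β - α/2)`. The logarithm in the bound for `D1` comes from the tail `|u|⁻¹` of the
weight over `1/b ≤ |u| ≤ 1`.
-/

lemma abs_rpow_sub_rpow_le_abs_sub_rpow {p a b : ℝ} (hp0 : 0 ≤ p) (hp1 : p ≤ 1)
    (ha : 0 ≤ a) (hb : 0 ≤ b) : |a ^ p - b ^ p| ≤ |a - b| ^ p := by
  wlog h : b ≤ a generalizing a b
  · rw [abs_sub_comm, abs_sub_comm a b]
    exact this hb ha (le_of_not_ge h)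
  rw [abs_of_nonneg (sub_nonneg.2 (rpow_le_rpow hb h hp0)), abs_of_nonneg (sub_nonneg.2 h),
    sub_le_iff_le_add]
  simpa only [sub_add_cancel] using rpow_add_le_add_rpow (sub_nonneg.2 h) hb hp0 hp1

lemma spow_neg (a p : ℝ) : spow (-a) p = -spow a p := by
  simp only [spow, Real.sign_neg, abs_neg, neg_mul]

lemma spow_of_nonneg {a p : ℝ} (ha : 0 ≤ a) (hp : p ≠ 0) : spow a p = a ^ p := by
  rcases ha.eq_or_lt with rfl | ha
  · simp only [spow, abs_zero, zero_rpow hp, mul_zero]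
  · rw [spow, Real.sign_of_pos ha, one_mul, abs_of_pos ha]

lemma abs_spow_le (a p : ℝ) : |spow a p| ≤ |a| ^ p := by
  have hsign : |Real.sign a| ≤ 1 := by
    rcases Real.sign_apply_eq a with h | h | h <;> simp [h]
  rw [spow, abs_mul, abs_of_nonneg (rpow_nonneg (abs_nonneg a) p)]
  exact mul_le_of_le_one_left (rpow_nonneg (abs_nonneg a) p) hsign

lemma abs_spow_sub_spow_le {p : ℝ} (hp0 : 0 < p) (hp1 : p ≤ 1) (a b : ℝ) :
    |spow a p - spow b p| ≤ 2 * |a - b| ^ p := by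
  wlog ha : 0 ≤ a generalizing a b
  · simpa only [spow_neg, neg_sub_neg, abs_sub_comm (spow b p), abs_sub_comm b]
      using this (-a) (-b) (neg_nonneg.2 (le_of_not_ge ha))
  rcases le_or_gt 0 b with hb | hb
  · rw [spow_of_nonneg ha hp0.ne', spow_of_nonneg hb hp0.ne']
    refine (abs_rpow_sub_rpow_le_abs_sub_rpow hp0.le hp1 ha hb).trans ?_
    exact le_mul_of_one_le_left (by positivity) one_le_two
  · have hab : |a - b| = |a| + |b| := by
      rw [abs_of_nonneg ha, abs_of_neg hb, abs_of_pos (by linarith), sub_eq_add_neg]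
    have hle_left : |a| ≤ |a - b| := hab ▸ le_add_of_nonneg_right (abs_nonneg b)
    have hle_right : |b| ≤ |a - b| := hab ▸ le_add_of_nonneg_left (abs_nonneg a)
    calc |spow a p - spow b p| ≤ |spow a p| + |spow b p| := abs_sub _ _
      _ ≤ |a| ^ p + |b| ^ p := add_le_add (abs_spow_le a p) (abs_spow_le b p)
      _ ≤ |a - b| ^ p + |a - b| ^ p := by
        gcongr
      _ = 2 * |a - b| ^ p := (two_mul _).symm

lemma measurable_spow (p : ℝ) : Measurable fun a => spow a p := by
  have hsign : Measurable Real.sign :=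
    Measurable.ite measurableSet_Iio measurable_const
      (Measurable.ite measurableSet_Ioi measurable_const measurable_const)
  exact hsign.mul (measurable_id.abs.pow_const p)

lemma abs_rpow_sub_rpow_le_mul_abs_sub {p a b m : ℝ} (hp : 1 ≤ p) (ha : a ∈ Icc 0 m)
    (hb : b ∈ Icc 0 m) : |a ^ p - b ^ p| ≤ p * m ^ (p - 1) * |a - b| := by
  refine (convex_Icc 0 m).norm_image_sub_le_of_norm_hasDerivWithin_le
    (fun x _ => (hasDerivAt_rpow_const (Or.inr hp)).hasDerivWithinAt) (fun x hx => ?_) hb ha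
  rw [norm_of_nonneg (mul_nonneg (by linarith) (rpow_nonneg hx.1 _))]
  have hxm : x ^ (p - 1) ≤ m ^ (p - 1) := rpow_le_rpow hx.1 hx.2 (by linarith)
  gcongr

lemma abs_mul_sub_mul_le (x y x₀ y₀ : ℝ) :
    |x * y - x₀ * y₀| ≤ |x - x₀| * |y| + |x₀| * |y - y₀| := by
  calc |x * y - x₀ * y₀| = |(x - x₀) * y + x₀ * (y - y₀)| := by ring_nf
    _ ≤ |x - x₀| * |y| + |x₀| * |y - y₀| := by
        rw [← abs_mul, ← abs_mul]
        exact abs_add_le _ _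

lemma abs_exp_neg_sub_exp_neg_le {x y m : ℝ} (hx : m ≤ x) (hy : m ≤ y) :
    |exp (-x) - exp (-y)| ≤ |x - y| * exp (-m) := by
  rw [mul_comm]
  refine (convex_Ici m).norm_image_sub_le_of_norm_hasDerivWithin_le (f := fun z => exp (-z))
    (fun z _ => (hasDerivAt_neg z).exp.hasDerivWithinAt) (fun z hz => ?_) hy hx
  rw [mul_neg_one, norm_neg, norm_of_nonneg (exp_pos _).le]
  exact exp_le_exp.2 (neg_le_neg hz)

lemma rpow_mul_rpow_le_add {p q x y : ℝ} (hp : 0 ≤ p) (hq : 0 ≤ q) (hx : 0 ≤ x) (hy : 0 ≤ y) :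
    x ^ p * y ^ q ≤ x ^ (p + q) + y ^ (p + q) := by
  calc x ^ p * y ^ q ≤ max x y ^ p * max x y ^ q := by
        gcongr
        exacts [le_max_left x y, le_max_right x y]
    _ = max x y ^ (p + q) := (rpow_add_of_nonneg (le_max_of_le_left hx) hp hq).symm
    _ ≤ x ^ (p + q) + y ^ (p + q) := by
        rcases max_choice x y with h | h <;> rw [h]
        exacts [le_add_of_nonneg_right (by positivity), le_add_of_nonneg_left (by positivity)]

lemma rpow_sub_one_mul_le {p x y : ℝ} (hp : p ≤ 2) (hy : 0 ≤ y) (hyx : y ≤ x) :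
    x ^ (p - 1) * y ≤ (x * y) ^ (p / 2) := by
  rcases hy.eq_or_lt with rfl | hy0
  · simpa only [mul_zero] using rpow_nonneg le_rfl _
  have hx0 : 0 < x := hy0.trans_le hyx
  calc x ^ (p - 1) * y = x ^ (p - 1) * (y ^ (1 - p / 2) * y ^ (p / 2)) := by
        rw [← rpow_add hy0, sub_add_cancel, rpow_one]
    _ ≤ x ^ (p - 1) * (x ^ (1 - p / 2) * y ^ (p / 2)) := by
        gcongr
        linarith
    _ = (x * y) ^ (p / 2) := by
        rw [← mul_assoc, ← rpow_add hx0, mul_rpow hx0.le hy]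
        ring_nf

lemma abs_add_rpow_sub_le {p : ℝ} (hp1 : 1 ≤ p) (hp2 : p ≤ 2) (x y : ℝ) :
    |(|x + y| ^ p - |x| ^ p - |y| ^ p)| ≤ 5 * |x * y| ^ (p / 2) := by
  wlog hyx : |y| ≤ |x| generalizing x y
  · rw [add_comm, mul_comm x, sub_right_comm]
    exact this y x (le_of_not_ge hyx)
  have hmixed := rpow_sub_one_mul_le hp2 (abs_nonneg y) hyx
  rw [← abs_mul] at hmixed
  have hy : |y| ^ p ≤ |x| ^ (p - 1) * |y| := by
    rcases (abs_nonneg y).eq_or_lt with hy0 | hy0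
    · rw [← hy0, zero_rpow (by linarith), mul_zero]
    · rw [← sub_add_cancel p 1, rpow_add_one hy0.ne', add_sub_cancel_right]
      gcongr
  have htwo : (2 : ℝ) ^ (p - 1) ≤ 2 := by
    simpa only [rpow_one] using rpow_le_rpow_of_exponent_le one_le_two (by linarith : p - 1 ≤ 1)
  have hsub : |(|x + y| - |x|)| ≤ |y| := by
    simpa only [add_sub_cancel_left] using abs_abs_sub_abs_le_abs_sub (x + y) x
  have hxy : |(|x + y| ^ p - |x| ^ p)| ≤ 4 * (|x| ^ (p - 1) * |y|) :=
    calc |(|x + y| ^ p - |x| ^ p)| ≤ p * (2 * |x|) ^ (p - 1) * |(|x + y| - |x|)| :=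
          abs_rpow_sub_rpow_le_mul_abs_sub hp1
            ⟨abs_nonneg _, by linarith [abs_add_le x y]⟩ ⟨abs_nonneg _, by linarith [abs_nonneg x]⟩
      _ ≤ 2 * (2 * |x| ^ (p - 1)) * |y| := by
          rw [mul_rpow zero_le_two (abs_nonneg x)]
          gcongr
      _ = 4 * (|x| ^ (p - 1) * |y|) := by ring
  calc |(|x + y| ^ p - |x| ^ p - |y| ^ p)| ≤ |(|x + y| ^ p - |x| ^ p)| + |(|y| ^ p)| := abs_sub _ _
    _ ≤ 5 * |x * y| ^ (p / 2) := by rw [abs_of_nonneg (by positivity : 0 ≤ |y| ^ p)]; linarith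

lemma abs_rpow_le_one_add_abs {p : ℝ} (hp0 : 0 ≤ p) (hp1 : p ≤ 1) (u : ℝ) : |u| ^ p ≤ 1 + |u| :=
  calc |u| ^ p ≤ (1 + |u|) ^ p := by
        gcongr
        linarith
    _ ≤ (1 + |u|) ^ (1 : ℝ) := rpow_le_rpow_of_exponent_le (by linarith [abs_nonneg u]) hp1
    _ = 1 + |u| := rpow_one _

lemma one_add_abs_pow_mul_exp_le {c p : ℝ} (hc : 0 < c) (hp : 1 ≤ p) (k : ℕ) (u : ℝ) :
    (1 + |u|) ^ k * exp (-(c * |u| ^ p)) ≤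
      (k + 2).factorial / c ^ (k + 2) * exp (2 * c) * (1 + u ^ 2)⁻¹ := by
  have hu : |u| ≤ 1 + |u| ^ p := by
    rcases le_total |u| 1 with h | h
    · linarith [rpow_nonneg (abs_nonneg u) p]
    · linarith [self_le_rpow_of_one_le h hp]
  have hpow : (1 + |u|) ^ (k + 2) ≤ (k + 2).factorial / c ^ (k + 2) * exp (c * (1 + |u|)) := by
    have := pow_div_factorial_le_exp (c * (1 + |u|)) (by positivity) (k + 2)
    rw [div_le_iff₀ (by positivity), mul_pow] at this
    rw [div_mul_eq_mul_div, le_div_iff₀ (by positivity)]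
    linarith
  have hsq : 1 + u ^ 2 ≤ (1 + |u|) ^ 2 := by nlinarith [sq_abs u, abs_nonneg u]
  rw [← div_eq_mul_inv, le_div_iff₀ (by positivity)]
  calc (1 + |u|) ^ k * exp (-(c * |u| ^ p)) * (1 + u ^ 2)
      ≤ (1 + |u|) ^ k * exp (-(c * |u| ^ p)) * (1 + |u|) ^ 2 := by gcongr
    _ = (1 + |u|) ^ (k + 2) * exp (-(c * |u| ^ p)) := by ring
    _ ≤ (k + 2).factorial / c ^ (k + 2) * exp (c * (1 + |u|)) * exp (-(c * |u| ^ p)) := by gcongr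
    _ = (k + 2).factorial / c ^ (k + 2) * exp (c * (1 + |u|) - c * |u| ^ p) := by
        rw [mul_assoc, ← exp_add, sub_eq_add_neg]
    _ ≤ (k + 2).factorial / c ^ (k + 2) * exp (2 * c) := by
        gcongr
        nlinarith

/-- The even function on the line which is `|t| ^ p` on the unit ball and `|t| ^ q` off it: the
comparison function for integrands with a power singularity at the origin and power decay. -/
noncomputable def brokenPower (p q t : ℝ) : ℝ := if |t| < 1 then |t| ^ p else |t| ^ q

lemma brokenPower_nonneg (p q t : ℝ) : 0 ≤ brokenPower p q t := by
  unfold brokenPower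
  split_ifs <;> positivity

lemma brokenPower_le_abs_rpow {p q r : ℝ} (hrp : r ≤ p) (hqr : q ≤ r) {t : ℝ} (ht : t ≠ 0) :
    brokenPower p q t ≤ |t| ^ r := by
  unfold brokenPower
  split_ifs with h
  · exact rpow_le_rpow_of_exponent_ge (abs_pos.2 ht) h.le hrp
  · exact rpow_le_rpow_of_exponent_le (not_lt.1 h) hqr

lemma brokenPower_mul_abs_rpow (p q r : ℝ) {t : ℝ} (ht : t ≠ 0) :
    brokenPower p q t * |t| ^ r = brokenPower (p + r) (q + r) t := by
  unfold brokenPower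
  split_ifs <;> rw [← rpow_add (abs_pos.2 ht)]

lemma integrable_brokenPower {p q : ℝ} (hp : -1 < p) (hq : q < -1) :
    Integrable (brokenPower p q) := by
  have hnear : IntegrableOn (brokenPower p q) (Ioo 0 1) :=
    ((intervalIntegral.integrableOn_Ioo_rpow_iff one_pos).2 hp).congr_fun
      (fun t ht => by simp only [brokenPower, abs_of_pos ht.1, if_pos ht.2]) measurableSet_Ioo
  have hfar : IntegrableOn (brokenPower p q) (Ioi 1) :=
    (integrableOn_Ioi_rpow_of_lt hq one_pos).congr_fun (fun t (ht : 1 < t) => by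
      simp only [brokenPower, abs_of_pos (one_pos.trans ht), if_neg ht.not_gt]) measurableSet_Ioi
  have hpos : IntegrableOn (brokenPower p q) (Ioi 0) := by
    rw [← Ioc_union_Ioi_eq_Ioi zero_le_one]
    exact (integrableOn_Ioc_iff_integrableOn_Ioo).2 hnear |>.union hfar
  have heven : (fun t => brokenPower p q ‖t‖) = brokenPower p q := by
    funext t
    simp only [brokenPower, Real.norm_eq_abs, abs_abs]
  rw [← heven, integrable_fun_norm_addHaar]
  simpa only [Module.finrank_self, tsub_self, pow_zero, one_smul] using hpos

lemma integrable_abs_rpow_mul_inv_one_add_sq {p : ℝ} (hp0 : -1 < p) (hp1 : p < 1) :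
    Integrable fun t : ℝ => |t| ^ p * (1 + t ^ 2)⁻¹ := by
  refine (integrable_brokenPower hp0 (by linarith : p - 2 < -1)).mono'
    (by fun_prop) (ae_of_all _ fun t => ?_)
  rw [norm_of_nonneg (by positivity), brokenPower]
  split_ifs with h
  · exact mul_le_of_le_one_right (by positivity)
      (inv_le_one_of_one_le₀ (le_add_of_nonneg_right (sq_nonneg t)))
  · have ht : 0 < |t| := one_pos.trans_le (not_lt.1 h)
    rw [rpow_sub ht, rpow_two, sq_abs, div_eq_mul_inv]
    gcongr
    · exact sq_pos_of_pos ht |>.trans_eq (sq_abs t)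
    · linarith

lemma abs_rpow_mul_abs_add_one_rpow_le {p q t : ℝ} (hq : q ≤ 0) (ht : t ≠ 0)
    (h : |t| ≤ |t + 1|) :
    |t| ^ p * |t + 1| ^ q ≤ 2 ^ (-q) * brokenPower p (p + q) t := by
  have hle : |t| ^ p * |t + 1| ^ q ≤ 2 ^ (-q) * (|t| ^ p * (max 1 |t|) ^ q) := by
    have : max 1 |t| / 2 ≤ |t + 1| := by
      have := abs_sub_abs_le_abs_sub 1 (-t)
      rw [abs_one, abs_neg, sub_neg_eq_add, add_comm 1] at this
      rcases max_choice 1 |t| with h | h <;> rw [h] <;> linarith [abs_nonneg t]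
    have hpow := rpow_le_rpow_of_nonpos (by positivity) this hq
    rw [div_rpow (by positivity) zero_le_two, div_eq_inv_mul, ← rpow_neg zero_le_two] at hpow
    rw [mul_left_comm]
    gcongr
  refine hle.trans_eq ?_
  unfold brokenPower
  split_ifs with h1
  · rw [max_eq_left h1.le, one_rpow, mul_one]
  · rw [max_eq_right (not_lt.1 h1), rpow_add (abs_pos.2 ht)]

lemma integrable_abs_rpow_mul_abs_add_one_rpow {p q : ℝ} (hp : -1 < p) (hq : -1 < q)
    (hpq : p + q < -1) : Integrable fun t : ℝ => |t| ^ p * |t + 1| ^ q := by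
  have hleft := (integrable_brokenPower hp hpq).const_mul (2 ^ (-q))
  have hright := ((integrable_brokenPower hq (add_comm p q ▸ hpq)).const_mul
    (2 ^ (-p))).comp_sub_left (-1 : ℝ)
  refine (hleft.add hright).mono' (by fun_prop) ?_
  filter_upwards [Measure.ae_ne volume (0 : ℝ),
    Measure.ae_ne volume (-1 : ℝ)] with t ht0 ht1
  rw [norm_of_nonneg (by positivity), Pi.add_apply]
  rcases le_total |t| |t + 1| with h | h
  · refine (abs_rpow_mul_abs_add_one_rpow_le (by linarith) ht0 h).trans ?_
    exact le_add_of_nonneg_right (mul_nonneg (by positivity) (brokenPower_nonneg _ _ _))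
  · have hreflect : |(-1 - t)| = |t + 1| ∧ |(-1 - t + 1)| = |t| :=
      ⟨by rw [← abs_neg]; ring_nf, by rw [← abs_neg]; ring_nf⟩
    have := abs_rpow_mul_abs_add_one_rpow_le (p := q) (q := p) (t := -1 - t) (by linarith)
      (sub_ne_zero.2 (Ne.symm ht1)) (by rwa [hreflect.1, hreflect.2])
    rw [hreflect.1, hreflect.2, mul_comm] at this
    refine this.trans ?_
    exact le_add_of_nonneg_left (mul_nonneg (by positivity) (brokenPower_nonneg _ _ _))

lemma abs_rpow_mul_abs_mul_add_rpow (p q : ℝ) {x y : ℝ} (hx : x ≠ 0) (hy : y ≠ 0) (t : ℝ) :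
    |t| ^ p * |x * t + y| ^ q =
      |x / y| ^ (-p) * |y| ^ q * (|x / y * t| ^ p * |x / y * t + 1| ^ q) := by
  have hxy : 0 < |x / y| := abs_pos.2 (div_ne_zero hx hy)
  have hadd : x * t + y = y * (x / y * t + 1) := by field_simp
  rw [hadd, abs_mul, abs_mul (x / y), mul_rpow (abs_nonneg _) (abs_nonneg _),
    mul_rpow (abs_nonneg _) (abs_nonneg _), rpow_neg hxy.le]
  field_simp

lemma integrable_abs_rpow_mul_abs_mul_add_rpow {p q x y : ℝ} (hp : -1 < p) (hq : -1 < q)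
    (hpq : p + q < -1) (hx : x ≠ 0) (hy : y ≠ 0) :
    Integrable fun t : ℝ => |t| ^ p * |x * t + y| ^ q := by
  simp only [abs_rpow_mul_abs_mul_add_rpow p q hx hy]
  exact ((integrable_abs_rpow_mul_abs_add_one_rpow hp hq hpq).comp_mul_left'
    (div_ne_zero hx hy)).const_mul _

lemma integral_abs_rpow_mul_abs_mul_add_rpow (p q : ℝ) {x y : ℝ} (hx : x ≠ 0) (hy : y ≠ 0) :
    ∫ t : ℝ, |t| ^ p * |x * t + y| ^ q =
      |x| ^ (-p - 1) * |y| ^ (p + q + 1) * ∫ t : ℝ, |t| ^ p * |t + 1| ^ q := by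
  have hx' := abs_pos.2 hx
  have hy' := abs_pos.2 hy
  simp only [abs_rpow_mul_abs_mul_add_rpow p q hx hy]
  rw [integral_const_mul, Measure.integral_comp_mul_left fun t : ℝ => |t| ^ p * |t + 1| ^ q,
    smul_eq_mul, ← mul_assoc]
  congr 1
  rw [abs_inv, abs_div, div_rpow hx'.le hy'.le, rpow_sub_one hx'.ne', rpow_add_one hy'.ne',
    rpow_add hy', rpow_neg hy'.le]
  field_simp

/-- The weight `F` of the two inequalities, of order `|u| ^ (-β)` near the origin and `|u|⁻¹` away
from it, with the change of regime at `|u| = 1 / b`. -/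
noncomputable def weight (β b u : ℝ) : ℝ :=
  if |u| < 1 / b then |u| ^ (-β) else b ^ (β - 1) * |u|⁻¹

section Weight

variable {β b : ℝ}

lemma weight_eq (β : ℝ) (hb : 0 < b) (u : ℝ) :
    weight β b u = b ^ β * brokenPower (-β) (-1) (b * u) := by
  simp only [weight, brokenPower, abs_mul, abs_of_pos hb, ← lt_div_iff₀' hb]
  split_ifs
  · rw [mul_rpow hb.le (abs_nonneg u), ← mul_assoc, ← rpow_add hb, add_neg_cancel, rpow_zero,
      one_mul]
  · rw [rpow_neg_one, mul_inv, rpow_sub_one hb.ne', div_eq_mul_inv, mul_assoc]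

lemma weight_nonneg (β : ℝ) (hb : 0 < b) (u : ℝ) : 0 ≤ weight β b u := by
  rw [weight_eq β hb]
  exact mul_nonneg (rpow_nonneg hb.le β) (brokenPower_nonneg _ _ _)

lemma measurable_weight (β b : ℝ) : Measurable (weight β b) :=
  Measurable.ite (measurableSet_lt measurable_id.abs measurable_const)
    (measurable_id.abs.pow_const _) (measurable_id.abs.inv.const_mul _)

lemma weight_le_rpow_mul_abs_rpow {γ : ℝ} (hβγ : β ≤ γ) (hγ : γ ≤ 1) (hb : 0 < b) {u : ℝ}
    (hu : u ≠ 0) : weight β b u ≤ b ^ (β - γ) * |u| ^ (-γ) := by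
  have hle := brokenPower_le_abs_rpow (neg_le_neg hβγ) (neg_le_neg hγ) (mul_ne_zero hb.ne' hu)
  calc weight β b u ≤ b ^ β * |b * u| ^ (-γ) := by
        rw [weight_eq β hb]
        gcongr
    _ = b ^ (β - γ) * |u| ^ (-γ) := by
        rw [abs_mul, abs_of_pos hb, mul_rpow hb.le (abs_nonneg u), ← mul_assoc, ← rpow_add hb,
          sub_eq_add_neg]

lemma weight_mul_abs_rpow (β r : ℝ) (hb : 0 < b) {u : ℝ} (hu : u ≠ 0) :
    weight β b u * |u| ^ r = b ^ (β - r) * brokenPower (-β + r) (-1 + r) (b * u) := by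
  rw [weight_eq β hb, ← brokenPower_mul_abs_rpow _ _ _ (mul_ne_zero hb.ne' hu), abs_mul,
    abs_of_pos hb, mul_rpow hb.le (abs_nonneg u), rpow_sub hb]
  field_simp

lemma integrable_weight_mul_abs_rpow {r : ℝ} (hβr : β - 1 < r) (hr : r < 0) (hb : 0 < b) :
    Integrable fun u => weight β b u * |u| ^ r := by
  have hint := integrable_brokenPower (p := -β + r) (q := -1 + r) (by linarith) (by linarith)
  refine ((hint.comp_mul_left' hb.ne').const_mul (b ^ (β - r))).congr ?_
  filter_upwards [Measure.ae_ne volume (0 : ℝ)] with u hu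
  exact (weight_mul_abs_rpow β r hb hu).symm

lemma integral_weight_mul_abs_rpow (β r : ℝ) (hb : 0 < b) :
    ∫ u, weight β b u * |u| ^ r =
      b ^ (β - 1 - r) * ∫ t, brokenPower (-β + r) (-1 + r) t := by
  calc ∫ u, weight β b u * |u| ^ r
      = ∫ u, b ^ (β - r) * brokenPower (-β + r) (-1 + r) (b * u) := by
        refine integral_congr_ae ?_
        filter_upwards [Measure.ae_ne volume (0 : ℝ)] with u hu
        exact weight_mul_abs_rpow β r hb hu
    _ = b ^ (β - 1 - r) * ∫ t, brokenPower (-β + r) (-1 + r) t := by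
        rw [integral_const_mul, Measure.integral_comp_mul_left (brokenPower (-β + r) (-1 + r)),
          smul_eq_mul, ← mul_assoc, abs_inv, abs_of_pos hb, sub_right_comm, rpow_sub_one hb.ne',
          div_eq_mul_inv]

lemma integrable_weight_mul_inv_one_add_sq (hβ : β < 1) (hb : 0 < b) :
    Integrable fun u => weight β b u * (1 + u ^ 2)⁻¹ := by
  obtain ⟨γ, hβγ, hγ⟩ := exists_between (max_lt hβ (neg_lt_self one_pos))
  have hint := integrable_abs_rpow_mul_inv_one_add_sq (p := -γ) (by linarith)
    (by linarith [le_max_right β (-1)])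
  refine (hint.const_mul (b ^ (β - γ))).mono'
    (by have := measurable_weight β b; fun_prop) ?_
  filter_upwards [Measure.ae_ne volume (0 : ℝ)] with u hu
  rw [norm_of_nonneg (mul_nonneg (weight_nonneg β hb u) (by positivity)), ← mul_assoc]
  gcongr
  exact weight_le_rpow_mul_abs_rpow ((le_max_left _ _).trans hβγ.le) hγ.le hb hu

lemma integral_weight_mul_inv_one_add_sq_le {γ : ℝ} (hβγ : β ≤ γ) (hγ0 : -1 < γ) (hγ : γ < 1)
    (hb : 0 < b) : ∫ u, weight β b u * (1 + u ^ 2)⁻¹ ≤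
      b ^ (β - γ) * ∫ u : ℝ, |u| ^ (-γ) * (1 + u ^ 2)⁻¹ := by
  rw [← integral_const_mul]
  refine integral_mono_of_nonneg
    (ae_of_all _ fun u => mul_nonneg (weight_nonneg β hb u) (by positivity))
    ((integrable_abs_rpow_mul_inv_one_add_sq (by linarith) (by linarith)).const_mul _) ?_
  filter_upwards [Measure.ae_ne volume (0 : ℝ)] with u hu
  rw [← mul_assoc]
  gcongr
  exact weight_le_rpow_mul_abs_rpow hβγ hγ.le hb hu

lemma hasDerivAt_neg_half_log_one_add_inv_sq {x : ℝ} (hx : x ≠ 0) :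
    HasDerivAt (fun x : ℝ => -(log (1 + x⁻¹ ^ 2) / 2)) (x⁻¹ * (1 + x ^ 2)⁻¹) x := by
  have hpos : 1 + x⁻¹ ^ 2 ≠ 0 := by positivity
  refine (((((hasDerivAt_inv hx).fun_pow 2).const_add 1).log hpos).div_const 2).neg.congr_deriv ?_
  rw [Nat.add_one_sub_one, pow_one]
  field_simp
  ring

lemma integral_Ioi_inv_mul_inv_one_add_sq {a : ℝ} (ha : 0 < a) :
    ∫ x in Ioi a, x⁻¹ * (1 + x ^ 2)⁻¹ = log (1 + a⁻¹ ^ 2) / 2 := by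
  have hlim : Tendsto (fun x : ℝ => -(log (1 + x⁻¹ ^ 2) / 2)) atTop (𝓝 0) := by
    have hcont : ContinuousAt (fun y : ℝ => -(log (1 + y ^ 2) / 2)) 0 :=
      ((ContinuousAt.log (by fun_prop) (by norm_num)).div_const 2).neg
    have hzero : -(log (1 + (0 : ℝ) ^ 2) / 2) = 0 := by norm_num
    exact (hzero ▸ hcont.tendsto).comp tendsto_inv_atTop_zero
  rw [integral_Ioi_of_hasDerivAt_of_nonneg'
    (fun x hx => hasDerivAt_neg_half_log_one_add_inv_sq (ha.trans_le hx).ne')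
    (fun x hx => by have := ha.trans hx; positivity) hlim, zero_sub, neg_neg]

lemma setIntegral_Ioc_weight_mul_inv_one_add_sq_le (hβ : β < 1) (hb : 0 < b) :
    ∫ u in Ioc 0 (1 / b), weight β b u * (1 + u ^ 2)⁻¹ ≤ b ^ (β - 1) / (1 - β) := by
  have hb' : 0 < 1 / b := one_div_pos.2 hb
  have hint : IntervalIntegrable (fun u : ℝ => u ^ (-β)) volume 0 (1 / b) :=
    intervalIntegral.intervalIntegrable_rpow' (by linarith)
  calc ∫ u in Ioc 0 (1 / b), weight β b u * (1 + u ^ 2)⁻¹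
      ≤ ∫ u in Ioc 0 (1 / b), u ^ (-β) := by
        refine setIntegral_mono_ae_restrict
          (integrable_weight_mul_inv_one_add_sq hβ hb).integrableOn
          ((intervalIntegrable_iff_integrableOn_Ioc_of_le hb'.le).1 hint) ?_
        filter_upwards [self_mem_ae_restrict measurableSet_Ioc] with u hu
        refine (mul_le_of_le_one_right (weight_nonneg β hb u)
          (inv_le_one_of_one_le₀ (le_add_of_nonneg_right (sq_nonneg u)))).trans ?_
        simpa only [sub_self, rpow_zero, one_mul, abs_of_pos hu.1]
          using weight_le_rpow_mul_abs_rpow le_rfl hβ.le hb hu.1.ne'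
    _ = b ^ (β - 1) / (1 - β) := by
        rw [← intervalIntegral.integral_of_le hb'.le, integral_rpow (Or.inl (by linarith)),
          zero_rpow (by linarith), sub_zero, one_div, inv_rpow hb.le, ← rpow_neg hb.le]
        ring_nf

lemma setIntegral_Ioi_weight_mul_inv_one_add_sq_le (β : ℝ) (hb : 0 < b) :
    ∫ u in Ioi (1 / b), weight β b u * (1 + u ^ 2)⁻¹ ≤ b ^ (β - 1) * log (b + 1) := by
  calc ∫ u in Ioi (1 / b), weight β b u * (1 + u ^ 2)⁻¹
      = ∫ u in Ioi (1 / b), b ^ (β - 1) * (u⁻¹ * (1 + u ^ 2)⁻¹) := by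
        refine setIntegral_congr_fun measurableSet_Ioi fun u (hu : 1 / b < u) => ?_
        rw [weight, abs_of_pos ((one_div_pos.2 hb).trans hu), if_neg hu.not_gt, mul_assoc]
    _ = b ^ (β - 1) * (log (1 + b ^ 2) / 2) := by
        rw [integral_const_mul, integral_Ioi_inv_mul_inv_one_add_sq (one_div_pos.2 hb), one_div,
          inv_inv]
    _ ≤ b ^ (β - 1) * log (b + 1) := by
        gcongr
        rw [div_le_iff₀' two_pos, ← log_rpow (by positivity), rpow_two]
        exact log_le_log (by positivity) (by nlinarith)

lemma integral_weight_mul_inv_one_add_sq_le_log (hβ : β < 1) (hb : 1 ≤ b) :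
    ∫ u, weight β b u * (1 + u ^ 2)⁻¹ ≤ (4 / (1 - β) + 2) * (b ^ (β - 1) * log (b + 1)) := by
  have hb0 : 0 < b := by linarith
  have hint := integrable_weight_mul_inv_one_add_sq hβ hb0
  have heven : (fun u => weight β b u * (1 + u ^ 2)⁻¹) =
      fun u => weight β b |u| * (1 + |u| ^ 2)⁻¹ := by
    simp only [weight, abs_abs, sq_abs]
  have hlog : 1 / 2 ≤ log (b + 1) :=
    calc 1 / 2 ≤ log 2 := by linarith [log_two_gt_d9]
      _ ≤ log (b + 1) := log_le_log two_pos (by linarith)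
  have hnear : b ^ (β - 1) / (1 - β) ≤ 2 / (1 - β) * (b ^ (β - 1) * log (b + 1)) := by
    have : 0 < 1 - β := by linarith
    rw [div_mul_eq_mul_div]
    gcongr
    nlinarith [rpow_pos_of_pos hb0 (β - 1)]
  have hsplit := setIntegral_union (Ioc_disjoint_Ioi_same (a := (0 : ℝ)) (b := 1 / b))
    measurableSet_Ioi hint.integrableOn hint.integrableOn
  rw [Ioc_union_Ioi_eq_Ioi (one_div_pos.2 hb0).le] at hsplit
  rw [heven, integral_comp_abs (f := fun u => weight β b u * (1 + u ^ 2)⁻¹), hsplit]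
  calc 2 * (_ + _)
      ≤ 2 * (2 / (1 - β) * (b ^ (β - 1) * log (b + 1)) + b ^ (β - 1) * log (b + 1)) := by
        gcongr
        · exact (setIntegral_Ioc_weight_mul_inv_one_add_sq_le hβ hb0).trans hnear
        · exact setIntegral_Ioi_weight_mul_inv_one_add_sq_le β hb0
    _ = (4 / (1 - β) + 2) * (b ^ (β - 1) * log (b + 1)) := by ring

end Weight

section Functionals

variable {S : Type*} [MeasurableSpace S] {μ : Measure S} {α : ℝ} {f g h k : S → ℝ}

lemma memLalpha_iff_memLp (hα : 0 < α) : MemLalpha α μ f ↔ MemLp f (ENNReal.ofReal α) μ := by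
  have hiff (hf : AEStronglyMeasurable f μ) :
      Integrable (fun s => |f s| ^ α) μ ↔ MemLp f (ENNReal.ofReal α) μ := by
    rw [← integrable_norm_rpow_iff hf (by simpa using hα) ENNReal.ofReal_ne_top,
      ENNReal.toReal_ofReal hα.le]
    rfl
  exact ⟨fun hf => (hiff hf.1).1 hf.2, fun hf => ⟨hf.1, (hiff hf.1).2 hf⟩⟩

lemma MemLalpha.const_mul (hα : 0 < α) (hf : MemLalpha α μ f) (c : ℝ) :
    MemLalpha α μ fun s => c * f s :=
  (memLalpha_iff_memLp hα).2 (((memLalpha_iff_memLp hα).1 hf).const_mul c)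

lemma MemLalpha.add (hα : 0 < α) (hf : MemLalpha α μ f) (hg : MemLalpha α μ g) :
    MemLalpha α μ fun s => f s + g s :=
  (memLalpha_iff_memLp hα).2
    (((memLalpha_iff_memLp hα).1 hf).add ((memLalpha_iff_memLp hα).1 hg))

lemma nrm_rpow (hα : α ≠ 0) (f : S → ℝ) : nrm α μ f ^ α = ∫ s, |f s| ^ α ∂μ := by
  rw [nrm, ← rpow_mul (integral_nonneg fun s => by positivity), one_div_mul_cancel hα, rpow_one]

lemma nrm_rpow_nonneg (hα : α ≠ 0) (f : S → ℝ) : 0 ≤ nrm α μ f ^ α := by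
  rw [nrm_rpow hα]
  exact integral_nonneg fun s => by positivity

lemma nrm_const_mul_rpow (hα : α ≠ 0) (c : ℝ) (f : S → ℝ) :
    nrm α μ (fun s => c * f s) ^ α = |c| ^ α * nrm α μ f ^ α := by
  simp only [nrm_rpow hα, abs_mul, mul_rpow (abs_nonneg _) (abs_nonneg _), integral_const_mul]

lemma dep1s_nonneg (α : ℝ) (μ : Measure S) (f g : S → ℝ) : 0 ≤ dep1s α μ f g :=
  integral_nonneg fun s => by positivity

lemma dep1_nonneg (α : ℝ) (μ : Measure S) (f g : S → ℝ) : 0 ≤ dep1 α μ f g :=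
  add_nonneg (dep1s_nonneg α μ f g) (dep1s_nonneg α μ g f)

lemma dep2_nonneg (α : ℝ) (μ : Measure S) (f g : S → ℝ) : 0 ≤ dep2 α μ f g :=
  integral_nonneg fun s => by positivity

lemma dep1s_const_mul_left (α c : ℝ) (μ : Measure S) (f g : S → ℝ) :
    dep1s α μ (fun s => c * f s) g = |c| ^ (α - 1) * dep1s α μ f g := by
  simp only [dep1s, abs_mul, mul_rpow (abs_nonneg _) (abs_nonneg _), mul_assoc, integral_const_mul]

lemma dep2_const_mul (α c d : ℝ) (μ : Measure S) (f g : S → ℝ) :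
    dep2 α μ (fun s => c * f s) (fun s => d * g s) =
      |c| ^ (α / 2) * |d| ^ (α / 2) * dep2 α μ f g := by
  simp only [dep2, ← integral_const_mul]
  congr with s
  simp only [abs_mul, mul_rpow (abs_nonneg _) (abs_nonneg _),
    mul_rpow (mul_nonneg (abs_nonneg _) (abs_nonneg _)) (mul_nonneg (abs_nonneg _) (abs_nonneg _))]
  ring

lemma aestronglyMeasurable_abs_rpow_mul_abs_rpow (hf : AEStronglyMeasurable f μ)
    (hg : AEStronglyMeasurable g μ) (p q : ℝ) :
    AEStronglyMeasurable (fun s => |f s| ^ p * |g s| ^ q) μ :=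
  ((hf.aemeasurable.abs.pow_const p).mul (hg.aemeasurable.abs.pow_const q)).aestronglyMeasurable

lemma integrable_abs_rpow_mul_abs_rpow {p q : ℝ} (hp : 0 ≤ p) (hq : 0 ≤ q)
    (hf : MemLalpha (p + q) μ f) (hg : MemLalpha (p + q) μ g) :
    Integrable (fun s => |f s| ^ p * |g s| ^ q) μ := by
  refine (hf.2.add hg.2).mono' (aestronglyMeasurable_abs_rpow_mul_abs_rpow hf.1 hg.1 p q)
    (ae_of_all _ fun s => ?_)
  rw [norm_of_nonneg (by positivity)]
  exact rpow_mul_rpow_le_add hp hq (abs_nonneg _) (abs_nonneg _)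

lemma integrable_dep1s (hα : 1 ≤ α) (hf : MemLalpha α μ f) (hg : MemLalpha α μ g) :
    Integrable (fun s => |f s| ^ (α - 1) * |g s|) μ := by
  rw [← sub_add_cancel α 1] at hf hg
  simpa only [rpow_one] using
    integrable_abs_rpow_mul_abs_rpow (sub_nonneg.2 hα) zero_le_one hf hg

lemma dep1s_le (hα : 1 ≤ α) (hf : MemLalpha α μ f) (hg : MemLalpha α μ g) :
    dep1s α μ f g ≤ nrm α μ f ^ α + nrm α μ g ^ α := by
  rw [nrm_rpow (by linarith), nrm_rpow (by linarith), ← integral_add hf.2 hg.2]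
  refine integral_mono (integrable_dep1s hα hf hg) (hf.2.add hg.2) fun s => ?_
  simpa only [rpow_one, sub_add_cancel] using rpow_mul_rpow_le_add (sub_nonneg.2 hα) zero_le_one
    (abs_nonneg (f s)) (abs_nonneg (g s))

lemma integrable_dep2 (hα : 0 ≤ α) (hf : MemLalpha α μ f) (hg : MemLalpha α μ g) :
    Integrable (fun s => |f s * g s| ^ (α / 2)) μ := by
  rw [← add_halves α] at hf hg
  simpa only [abs_mul, mul_rpow (abs_nonneg _) (abs_nonneg _)] using
    integrable_abs_rpow_mul_abs_rpow (by linarith) (by linarith) hf hg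

/-- The integral `∫ h ^ ⟨α - 1⟩ f dμ`, the covariation of two jointly symmetric `α`-stable random
variables with spectral pair `(f, h)`. -/
noncomputable def covariation (α : ℝ) (μ : Measure S) (h f : S → ℝ) : ℝ :=
  ∫ s, spow (h s) (α - 1) * f s ∂μ

lemma integrable_spow_mul (hα : 1 ≤ α) (hh : MemLalpha α μ h) (hf : MemLalpha α μ f) :
    Integrable (fun s => spow (h s) (α - 1) * f s) μ := by
  refine (integrable_dep1s hα hh hf).mono'
    (((measurable_spow _).comp_aemeasurable hh.1.aemeasurable).aestronglyMeasurable.mul hf.1)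
    (ae_of_all _ fun s => ?_)
  rw [norm_mul]
  exact mul_le_mul_of_nonneg_right (abs_spow_le _ _) (abs_nonneg _)

lemma abs_covariation_le (hα : 1 ≤ α) (hh : MemLalpha α μ h) (hf : MemLalpha α μ f) :
    |covariation α μ h f| ≤ dep1s α μ h f := by
  rw [← Real.norm_eq_abs]
  refine norm_integral_le_of_norm_le (integrable_dep1s hα hh hf) (ae_of_all _ fun s => ?_)
  rw [norm_mul]
  exact mul_le_mul_of_nonneg_right (abs_spow_le _ _) (abs_nonneg _)

lemma abs_covariation_add_sub_le (hα1 : 1 < α) (hα2 : α ≤ 2) (hh : MemLalpha α μ h)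
    (hk : MemLalpha α μ k) (hf : MemLalpha α μ f) :
    |covariation α μ (fun s => h s + k s) f - covariation α μ h f| ≤ 2 * dep1s α μ k f := by
  rw [covariation, covariation, dep1s,
    ← integral_sub (integrable_spow_mul hα1.le (hh.add (by linarith) hk) hf)
      (integrable_spow_mul hα1.le hh hf), ← integral_const_mul, ← Real.norm_eq_abs]
  refine norm_integral_le_of_norm_le ((integrable_dep1s hα1.le hk hf).const_mul 2)
    (ae_of_all _ fun s => ?_)
  rw [← sub_mul, norm_mul, ← mul_assoc]
  refine mul_le_mul_of_nonneg_right ?_ (abs_nonneg _)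
  simpa only [add_sub_cancel_left, Real.norm_eq_abs] using
    abs_spow_sub_spow_le (by linarith : 0 < α - 1) (by linarith) (h s + k s) (h s)

lemma abs_nrm_add_rpow_sub_le (hα1 : 1 ≤ α) (hα2 : α ≤ 2) (hh : MemLalpha α μ h)
    (hk : MemLalpha α μ k) :
    |nrm α μ (fun s => h s + k s) ^ α - nrm α μ h ^ α - nrm α μ k ^ α| ≤ 5 * dep2 α μ h k := by
  have hhk := hh.add (by linarith) hk
  have hα0 : α ≠ 0 := by linarith
  have hint : Integrable (fun s => |h s + k s| ^ α - |h s| ^ α) μ := hhk.2.sub hh.2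
  rw [nrm_rpow hα0, nrm_rpow hα0, nrm_rpow hα0, ← integral_sub hhk.2 hh.2,
    ← integral_sub hint hk.2, dep2, ← integral_const_mul, ← Real.norm_eq_abs]
  exact norm_integral_le_of_norm_le ((integrable_dep2 (by linarith) hh hk).const_mul 5)
    (ae_of_all _ fun s => abs_add_rpow_sub_le hα1 hα2 (h s) (k s))

end Functionals

section Pointwise

variable {S : Type*} [MeasurableSpace S] {μ : Measure S} {α c P : ℝ} {f g : S → ℝ}

/-- A pair of functions in `L^α` satisfying assumption (A2) in the normalized form
`c (|u|^α + |v|^α) ≤ ‖u f + v g‖^α`, with `‖f‖^α + ‖g‖^α` bounded by `P`. The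
constants of the two inequalities depend on the pair only through `c` and `P`. -/
structure NondegeneratePair (α c P : ℝ) {S : Type*} [MeasurableSpace S] (μ : Measure S)
    (f g : S → ℝ) : Prop where
  memLalpha_left : MemLalpha α μ f
  memLalpha_right : MemLalpha α μ g
  mul_le_nrm_rpow (u v : ℝ) :
    c * (|u| ^ α + |v| ^ α) ≤ nrm α μ (fun s => u * f s + v * g s) ^ α
  nrm_rpow_add_le : nrm α μ f ^ α + nrm α μ g ^ α ≤ P

lemma A2.nondegeneratePair {ε : ℝ} (hε : 0 ≤ ε) (hf : MemLalpha α μ f) (hg : MemLalpha α μ g)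
    (h : A2 α ε μ f g) :
    NondegeneratePair α (ε * min (nrm α μ f ^ α) (nrm α μ g ^ α))
      (nrm α μ f ^ α + nrm α μ g ^ α) μ f g where
  memLalpha_left := hf
  memLalpha_right := hg
  mul_le_nrm_rpow u v := by
    refine le_trans ?_ (h u v)
    rw [mul_assoc, mul_add, mul_comm (min _ _), mul_comm (min _ _)]
    gcongr
    exacts [min_le_left _ _, min_le_right _ _]
  nrm_rpow_add_le := le_rfl

/-- The joint characteristic function of the symmetric `α`-stable pair with spectral functions
`f` and `g`. -/
noncomputable def jointCF (α : ℝ) (μ : Measure S) (f g : S → ℝ) (u v : ℝ) : ℝ :=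
  exp (-(nrm α μ (fun s => u * f s + v * g s) ^ α))

/-- The product of the characteristic functions of the two components of the symmetric `α`-stable
pair with spectral functions `f` and `g`. -/
noncomputable def productCF (α : ℝ) (μ : Measure S) (f g : S → ℝ) (u v : ℝ) : ℝ :=
  exp (-(nrm α μ (fun s => u * f s) ^ α) - nrm α μ (fun s => v * g s) ^ α)

/-- The integral `∫ |u f + v g|^(α - 2) f g dμ`, which is `(α - 1)⁻¹` times the derivative of
`∫ (u f + v g) ^ ⟨α - 1⟩ f dμ` in `v`. -/
noncomputable def mixedKernel (α : ℝ) (μ : Measure S) (f g : S → ℝ) (u v : ℝ) : ℝ :=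
  ∫ s, |u * f s + v * g s| ^ (α - 2) * (f s * g s) ∂μ

lemma jointCF_comm (α : ℝ) (μ : Measure S) (f g : S → ℝ) (u v : ℝ) :
    jointCF α μ f g u v = jointCF α μ g f v u := by
  simp only [jointCF, add_comm]

lemma productCF_comm (α : ℝ) (μ : Measure S) (f g : S → ℝ) (u v : ℝ) :
    productCF α μ f g u v = productCF α μ g f v u := by
  rw [productCF, productCF, neg_sub_left, neg_sub_left, add_comm]

lemma jointCF_nonneg (α : ℝ) (μ : Measure S) (f g : S → ℝ) (u v : ℝ) :
    0 ≤ jointCF α μ f g u v :=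
  (exp_pos _).le

lemma jointCF_le_one (hα : α ≠ 0) (μ : Measure S) (f g : S → ℝ) (u v : ℝ) :
    jointCF α μ f g u v ≤ 1 :=
  exp_le_one_iff.2 (neg_nonpos.2 (nrm_rpow_nonneg hα _))

lemma D1_eq (α : ℝ) (μ : Measure S) (f g : S → ℝ) (u v : ℝ) :
    D1 α μ f g u v = -(α * (covariation α μ (fun s => u * f s + v * g s) f * jointCF α μ f g u v -
      covariation α μ (fun s => u * f s) f * productCF α μ f g u v)) := by
  simp only [D1, covariation, jointCF, productCF]
  ring

lemma D2_eq (α : ℝ) (μ : Measure S) (f g : S → ℝ) (u v : ℝ) :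
    D2 α μ f g u v =
      -(α * (α - 1)) * (mixedKernel α μ f g u v * jointCF α μ f g u v) +
      α ^ 2 * (covariation α μ (fun s => u * f s + v * g s) f *
          (covariation α μ (fun s => u * f s + v * g s) g * jointCF α μ f g u v) -
        covariation α μ (fun s => u * f s) f *
          (covariation α μ (fun s => v * g s) g * productCF α μ f g u v)) := by
  have hkernel : ∀ s, (if f s = 0 ∨ g s = 0 then (0 : ℝ) else
      |u * f s + v * g s| ^ (α - 2) * (f s * g s)) =
      |u * f s + v * g s| ^ (α - 2) * (f s * g s) := fun s =>
    ite_eq_right_iff.2 fun h => by rw [mul_eq_zero.2 h, mul_zero]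
  simp only [D2, hkernel, covariation, jointCF, productCF, mixedKernel]
  ring

/-- The bound `((1 + |u|) (1 + |v|))^k exp (-c (|u|^α + |v|^α))` for products of `k` polynomially
growing factors with a characteristic function. -/
noncomputable def envelope (α c : ℝ) (k : ℕ) (u v : ℝ) : ℝ :=
  ((1 + |u|) * (1 + |v|)) ^ k * exp (-(c * (|u| ^ α + |v| ^ α)))

lemma envelope_comm (α c : ℝ) (k : ℕ) (u v : ℝ) : envelope α c k u v = envelope α c k v u := by
  rw [envelope, envelope, mul_comm (1 + |u|), add_comm (|u| ^ α)]

lemma envelope_nonneg (α c : ℝ) (k : ℕ) (u v : ℝ) : 0 ≤ envelope α c k u v := by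
  unfold envelope
  positivity

lemma one_le_one_add_abs_mul (u v : ℝ) : 1 ≤ (1 + |u|) * (1 + |v|) :=
  one_le_mul_of_one_le_of_one_le (le_add_of_nonneg_right (abs_nonneg u))
    (le_add_of_nonneg_right (abs_nonneg v))

lemma pow_mul_envelope (α c : ℝ) (j k : ℕ) (u v : ℝ) :
    ((1 + |u|) * (1 + |v|)) ^ j * envelope α c k u v = envelope α c (j + k) u v := by
  rw [envelope, envelope, pow_add, mul_assoc]

lemma envelope_mono (α c u v : ℝ) : Monotone fun k => envelope α c k u v := fun _ _ hjk =>
  mul_le_mul_of_nonneg_right (pow_le_pow_right₀ (one_le_one_add_abs_mul u v) hjk) (exp_pos _).le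

/-- The constant with which `envelope α c k u v` is dominated by `(1 + u²)⁻¹ (1 + v²)⁻¹`. -/
noncomputable def envelopeConst (c : ℝ) (k : ℕ) : ℝ :=
  ((k + 2).factorial / c ^ (k + 2) * exp (2 * c)) ^ 2

lemma envelopeConst_nonneg (c : ℝ) (k : ℕ) : 0 ≤ envelopeConst c k := sq_nonneg _

lemma envelope_le (hc : 0 < c) (hα : 1 ≤ α) (k : ℕ) (u v : ℝ) :
    envelope α c k u v ≤ envelopeConst c k * ((1 + u ^ 2)⁻¹ * (1 + v ^ 2)⁻¹) := by
  calc envelope α c k u v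
      = ((1 + |u|) ^ k * exp (-(c * |u| ^ α))) * ((1 + |v|) ^ k * exp (-(c * |v| ^ α))) := by
        rw [envelope, mul_pow, mul_add, neg_add, exp_add]
        ring
    _ ≤ _ := mul_le_mul (one_add_abs_pow_mul_exp_le hc hα k u)
        (one_add_abs_pow_mul_exp_le hc hα k v) (by positivity) (by positivity)
    _ = _ := by
        rw [envelopeConst]
        ring

namespace NondegeneratePair

lemma symm (H : NondegeneratePair α c P μ f g) : NondegeneratePair α c P μ g f where
  memLalpha_left := H.memLalpha_right
  memLalpha_right := H.memLalpha_left
  mul_le_nrm_rpow u v := by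
    simpa only [add_comm] using H.mul_le_nrm_rpow v u
  nrm_rpow_add_le := by
    rw [add_comm]
    exact H.nrm_rpow_add_le

lemma jointCF_le (H : NondegeneratePair α c P μ f g) (u v : ℝ) :
    jointCF α μ f g u v ≤ envelope α c 0 u v := by
  rw [envelope, pow_zero, one_mul]
  exact exp_le_exp.2 (neg_le_neg (H.mul_le_nrm_rpow u v))

lemma le_nrm_left_rpow (hα : α ≠ 0) (H : NondegeneratePair α c P μ f g) : c ≤ nrm α μ f ^ α := by
  simpa [hα] using H.mul_le_nrm_rpow 1 0

lemma bound_nonneg (hα : α ≠ 0) (H : NondegeneratePair α c P μ f g) : 0 ≤ P :=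
  (add_nonneg (nrm_rpow_nonneg hα f) (nrm_rpow_nonneg hα g)).trans H.nrm_rpow_add_le

lemma dep1s_le (hα : 1 ≤ α) (H : NondegeneratePair α c P μ f g) : dep1s α μ f g ≤ P :=
  (_root_.dep1s_le hα H.memLalpha_left H.memLalpha_right).trans H.nrm_rpow_add_le

lemma abs_jointCF_sub_productCF_le (hα1 : 1 ≤ α) (hα2 : α ≤ 2)
    (H : NondegeneratePair α c P μ f g) (u v : ℝ) :
    |jointCF α μ f g u v - productCF α μ f g u v| ≤ 5 * dep2 α μ f g * envelope α c 1 u v := by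
  have hα0 : 0 < α := by linarith
  have hsep : c * (|u| ^ α + |v| ^ α) ≤
      nrm α μ (fun s => u * f s) ^ α + nrm α μ (fun s => v * g s) ^ α := by
    rw [nrm_const_mul_rpow hα0.ne', nrm_const_mul_rpow hα0.ne', mul_add, mul_comm c, mul_comm c]
    gcongr
    exacts [H.le_nrm_left_rpow hα0.ne', H.symm.le_nrm_left_rpow hα0.ne']
  have hexp := abs_exp_neg_sub_exp_neg_le (H.mul_le_nrm_rpow u v) hsep
  have hnrm := abs_nrm_add_rpow_sub_le hα1 hα2 (H.memLalpha_left.const_mul hα0 u)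
    (H.memLalpha_right.const_mul hα0 v)
  have hu := abs_rpow_le_one_add_abs (p := α / 2) (by linarith) (by linarith) u
  have hv := abs_rpow_le_one_add_abs (p := α / 2) (by linarith) (by linarith) v
  have hd := dep2_nonneg α μ f g
  rw [dep2_const_mul, sub_sub] at hnrm
  rw [jointCF, productCF, ← neg_add', envelope, pow_one, ← mul_assoc]
  refine hexp.trans (mul_le_mul_of_nonneg_right (hnrm.trans ?_) (exp_pos _).le)
  calc 5 * (|u| ^ (α / 2) * |v| ^ (α / 2) * dep2 α μ f g)
      ≤ 5 * ((1 + |u|) * (1 + |v|) * dep2 α μ f g) := by gcongr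
    _ = 5 * dep2 α μ f g * ((1 + |u|) * (1 + |v|)) := by ring

lemma abs_covariation_left_le (hα1 : 1 ≤ α) (hα2 : α ≤ 2) (H : NondegeneratePair α c P μ f g)
    (u v : ℝ) :
    |covariation α μ (fun s => u * f s) f| ≤ 2 * P * ((1 + |u|) * (1 + |v|)) := by
  have hα0 : 0 < α := by linarith
  have hself : dep1s α μ f f ≤ 2 * P := by
    linarith [_root_.dep1s_le hα1 H.memLalpha_left H.memLalpha_left, H.nrm_rpow_add_le,
      nrm_rpow_nonneg (μ := μ) hα0.ne' g]
  have hpow : |u| ^ (α - 1) ≤ (1 + |u|) * (1 + |v|) :=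
    (abs_rpow_le_one_add_abs (by linarith) (by linarith) u).trans
      (le_mul_of_one_le_right (by positivity) (le_add_of_nonneg_right (abs_nonneg v)))
  calc |covariation α μ (fun s => u * f s) f|
      ≤ |u| ^ (α - 1) * dep1s α μ f f := by
        rw [← dep1s_const_mul_left]
        exact abs_covariation_le hα1 (H.memLalpha_left.const_mul hα0 u) H.memLalpha_left
    _ ≤ (1 + |u|) * (1 + |v|) * (2 * P) :=
        mul_le_mul hpow hself (dep1s_nonneg _ _ _ _) (by positivity)
    _ = 2 * P * ((1 + |u|) * (1 + |v|)) := mul_comm _ _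

lemma abs_covariation_sub_le (hα1 : 1 < α) (hα2 : α ≤ 2) (H : NondegeneratePair α c P μ f g)
    (u v : ℝ) :
    |covariation α μ (fun s => u * f s + v * g s) f - covariation α μ (fun s => u * f s) f| ≤
      2 * dep1s α μ g f * ((1 + |u|) * (1 + |v|)) := by
  have hα0 : 0 < α := by linarith
  have hpow : |v| ^ (α - 1) ≤ (1 + |u|) * (1 + |v|) :=
    (abs_rpow_le_one_add_abs (by linarith) (by linarith) v).trans
      (le_mul_of_one_le_left (by positivity) (le_add_of_nonneg_right (abs_nonneg u)))
  refine (abs_covariation_add_sub_le hα1 hα2 (H.memLalpha_left.const_mul hα0 u)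
    (H.memLalpha_right.const_mul hα0 v) H.memLalpha_left).trans ?_
  rw [dep1s_const_mul_left, mul_assoc, mul_comm (|v| ^ (α - 1))]
  have := dep1s_nonneg α μ g f
  gcongr

lemma abs_covariation_mul_jointCF_sub_le (hα1 : 1 < α) (hα2 : α ≤ 2)
    (H : NondegeneratePair α c P μ f g) (u v : ℝ) :
    |covariation α μ (fun s => u * f s + v * g s) f * jointCF α μ f g u v -
        covariation α μ (fun s => u * f s) f * productCF α μ f g u v| ≤
      (2 + 10 * P) * (dep1s α μ g f + dep2 α μ f g) * envelope α c 2 u v := by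
  have ha := dep1s_nonneg α μ g f
  have hd := dep2_nonneg α μ f g
  have hP := H.bound_nonneg (by linarith : α ≠ 0)
  have hcov : |covariation α μ (fun s => u * f s + v * g s) f -
      covariation α μ (fun s => u * f s) f| * |jointCF α μ f g u v| ≤
      2 * dep1s α μ g f * envelope α c 2 u v := by
    refine le_trans ?_ (mul_le_mul_of_nonneg_left
      (envelope_mono α c u v (by norm_num : 1 + 0 ≤ 2)) (by positivity))
    dsimp only
    rw [← pow_mul_envelope, pow_one, ← mul_assoc, abs_of_nonneg (jointCF_nonneg _ _ _ _ _ _)]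
    exact mul_le_mul (H.abs_covariation_sub_le hα1 hα2 u v) (H.jointCF_le u v)
      (jointCF_nonneg _ _ _ _ _ _) (by positivity)
  have hCF : |covariation α μ (fun s => u * f s) f| *
      |jointCF α μ f g u v - productCF α μ f g u v| ≤
      10 * P * dep2 α μ f g * envelope α c 2 u v := by
    refine (mul_le_mul (H.abs_covariation_left_le hα1.le hα2 u v)
      (H.abs_jointCF_sub_productCF_le hα1.le hα2 u v) (abs_nonneg _) (by positivity)).trans_eq ?_
    rw [← pow_mul_envelope α c 1 1, pow_one]
    ring
  have hdrop : 0 ≤ (2 * dep2 α μ f g + 10 * P * dep1s α μ g f) * envelope α c 2 u v :=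
    mul_nonneg (by positivity) (envelope_nonneg _ _ _ _ _)
  linarith [abs_mul_sub_mul_le (covariation α μ (fun s => u * f s + v * g s) f)
    (jointCF α μ f g u v) (covariation α μ (fun s => u * f s) f) (productCF α μ f g u v)]

lemma abs_covariation_right_mul_jointCF_sub_le (hα1 : 1 < α) (hα2 : α ≤ 2)
    (H : NondegeneratePair α c P μ f g) (u v : ℝ) :
    |covariation α μ (fun s => u * f s + v * g s) g * jointCF α μ f g u v -
        covariation α μ (fun s => v * g s) g * productCF α μ f g u v| ≤
      (2 + 10 * P) * (dep1s α μ f g + dep2 α μ f g) * envelope α c 2 u v := by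
  have hswap := H.symm.abs_covariation_mul_jointCF_sub_le hα1 hα2 v u
  simpa only [add_comm, jointCF_comm α μ g f, productCF_comm α μ g f, envelope_comm α c 2 v,
    dep2, mul_comm] using hswap

lemma abs_D1_le (hα1 : 1 < α) (hα2 : α ≤ 2) (hc : 0 < c) (H : NondegeneratePair α c P μ f g)
    (u v : ℝ) :
    |D1 α μ f g u v| ≤ α * (2 + 10 * P) * envelopeConst c 2 *
      (dep1s α μ g f + dep2 α μ f g) * ((1 + u ^ 2)⁻¹ * (1 + v ^ 2)⁻¹) := by
  have hα0 : 0 ≤ α := by linarith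
  have hP := H.bound_nonneg (by linarith : α ≠ 0)
  have ha := dep1s_nonneg α μ g f
  have hd := dep2_nonneg α μ f g
  calc |D1 α μ f g u v|
      ≤ α * ((2 + 10 * P) * (dep1s α μ g f + dep2 α μ f g) * envelope α c 2 u v) := by
        rw [D1_eq, abs_neg, abs_mul, abs_of_nonneg hα0]
        exact mul_le_mul_of_nonneg_left (H.abs_covariation_mul_jointCF_sub_le hα1 hα2 u v) hα0
    _ ≤ α * ((2 + 10 * P) * (dep1s α μ g f + dep2 α μ f g) *
        (envelopeConst c 2 * ((1 + u ^ 2)⁻¹ * (1 + v ^ 2)⁻¹))) := by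
        gcongr
        exact envelope_le hc hα1.le 2 u v
    _ = _ := by ring

lemma abs_covariation_combination_le (hα1 : 1 < α) (hα2 : α ≤ 2)
    (H : NondegeneratePair α c P μ f g) (u v : ℝ) :
    |covariation α μ (fun s => u * f s + v * g s) f| ≤ 4 * P * ((1 + |u|) * (1 + |v|)) := by
  have hsub := H.abs_covariation_sub_le hα1 hα2 u v
  have hleft := H.abs_covariation_left_le hα1.le hα2 u v
  have hdep : 2 * dep1s α μ g f * ((1 + |u|) * (1 + |v|)) ≤ 2 * P * ((1 + |u|) * (1 + |v|)) := by
    have := H.symm.dep1s_le hα1.le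
    gcongr
  linarith [abs_sub_abs_le_abs_sub (covariation α μ (fun s => u * f s + v * g s) f)
    (covariation α μ (fun s => u * f s) f)]

lemma abs_covariation_right_mul_jointCF_le (hα1 : 1 < α) (hα2 : α ≤ 2)
    (H : NondegeneratePair α c P μ f g) (u v : ℝ) :
    |covariation α μ (fun s => u * f s + v * g s) g * jointCF α μ f g u v| ≤
      4 * P * envelope α c 1 u v := by
  have hP := H.bound_nonneg (by linarith : α ≠ 0)
  have hcov : |covariation α μ (fun s => u * f s + v * g s) g| ≤
      4 * P * ((1 + |u|) * (1 + |v|)) := by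
    simpa only [add_comm, mul_comm] using H.symm.abs_covariation_combination_le hα1 hα2 v u
  rw [abs_mul, abs_of_nonneg (jointCF_nonneg _ _ _ _ _ _), ← pow_mul_envelope α c 1 0, pow_one,
    ← mul_assoc]
  exact mul_le_mul hcov (H.jointCF_le u v) (jointCF_nonneg _ _ _ _ _ _) (by positivity)

lemma abs_covariation_mul_covariation_sub_le (hα1 : 1 < α) (hα2 : α ≤ 2)
    (H : NondegeneratePair α c P μ f g) (u v : ℝ) :
    |covariation α μ (fun s => u * f s + v * g s) f *
          (covariation α μ (fun s => u * f s + v * g s) g * jointCF α μ f g u v) -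
        covariation α μ (fun s => u * f s) f *
          (covariation α μ (fun s => v * g s) g * productCF α μ f g u v)| ≤
      (8 * P + 20 * P ^ 2) * (dep1 α μ f g + dep2 α μ f g) * envelope α c 3 u v := by
  have ha := dep1s_nonneg α μ g f
  have ha' := dep1s_nonneg α μ f g
  have hd := dep2_nonneg α μ f g
  have hP := H.bound_nonneg (by linarith : α ≠ 0)
  have hleft := mul_le_mul (H.abs_covariation_sub_le hα1 hα2 u v)
    (H.abs_covariation_right_mul_jointCF_le hα1 hα2 u v) (abs_nonneg _) (by positivity)
  have hright := mul_le_mul (H.abs_covariation_left_le hα1.le hα2 u v)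
    (H.abs_covariation_right_mul_jointCF_sub_le hα1 hα2 u v) (abs_nonneg _) (by positivity)
  have hmono : envelope α c 2 u v ≤ envelope α c 3 u v :=
    envelope_mono α c u v (by norm_num : 2 ≤ 3)
  calc _ ≤ _ := (abs_mul_sub_mul_le _ _ _ _).trans (add_le_add hleft hright)
    _ = 8 * P * dep1s α μ g f * envelope α c 2 u v +
        (4 * P + 20 * P ^ 2) * (dep1s α μ f g + dep2 α μ f g) * envelope α c 3 u v := by
        rw [← pow_mul_envelope α c 1 2, ← pow_mul_envelope α c 1 1, pow_one]
        ring
    _ ≤ (8 * P + 20 * P ^ 2) * dep1s α μ g f * envelope α c 3 u v +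
        (8 * P + 20 * P ^ 2) * (dep1s α μ f g + dep2 α μ f g) * envelope α c 3 u v := by
        have := envelope_nonneg α c 2 u v
        have := envelope_nonneg α c 3 u v
        gcongr <;> nlinarith
    _ = _ := by
        rw [dep1]
        ring

lemma abs_D2_le (hα1 : 1 < α) (hα2 : α ≤ 2) (hc : 0 < c) (H : NondegeneratePair α c P μ f g)
    (u v : ℝ) :
    |D2 α μ f g u v| ≤ α * (α - 1) * |mixedKernel α μ f g u v| +
      α ^ 2 * (8 * P + 20 * P ^ 2) * envelopeConst c 3 * (dep1 α μ f g + dep2 α μ f g) *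
        ((1 + u ^ 2)⁻¹ * (1 + v ^ 2)⁻¹) := by
  have hα0 : 0 ≤ α * (α - 1) := mul_nonneg (by linarith) (by linarith)
  have hP := H.bound_nonneg (by linarith : α ≠ 0)
  have ha := dep1_nonneg α μ f g
  have hd := dep2_nonneg α μ f g
  rw [D2_eq]
  refine (abs_add_le _ _).trans (add_le_add ?_ ?_)
  · rw [abs_mul, abs_neg, abs_of_nonneg hα0, abs_mul,
      abs_of_nonneg (jointCF_nonneg _ _ _ _ _ _)]
    exact mul_le_mul_of_nonneg_left (mul_le_of_le_one_right (abs_nonneg _)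
      (jointCF_le_one (by linarith) μ f g u v)) hα0
  · rw [abs_mul, abs_of_nonneg (sq_nonneg α)]
    calc _ ≤ α ^ 2 * ((8 * P + 20 * P ^ 2) * (dep1 α μ f g + dep2 α μ f g) *
          (envelopeConst c 3 * ((1 + u ^ 2)⁻¹ * (1 + v ^ 2)⁻¹))) := by
          grw [H.abs_covariation_mul_covariation_sub_le hα1 hα2 u v, envelope_le hc hα1.le 3 u v]
      _ = _ := by ring

end NondegeneratePair

end Pointwise

section IteratedIntegrals

variable {X Y : Type*} [MeasurableSpace X] [MeasurableSpace Y] {μ : Measure X} {ν : Measure Y}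
  {φ : X → ℝ} {ψ : Y → ℝ}

lemma lintegral_lintegral_ofReal_mul (hφ : Integrable φ μ) (hψ : Integrable ψ ν) (hφ0 : 0 ≤ φ)
    (hψ0 : 0 ≤ ψ) :
    ∫⁻ x, ∫⁻ y, ENNReal.ofReal (φ x * ψ y) ∂ν ∂μ =
      ENNReal.ofReal ((∫ x, φ x ∂μ) * ∫ y, ψ y ∂ν) := by
  have hinner (x : X) : ∫⁻ y, ENNReal.ofReal (φ x * ψ y) ∂ν =
      ENNReal.ofReal (φ x) * ENNReal.ofReal (∫ y, ψ y ∂ν) := by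
    simp only [ENNReal.ofReal_mul (hφ0 x)]
    rw [lintegral_const_mul' _ _ ENNReal.ofReal_ne_top,
      ofReal_integral_eq_lintegral_ofReal hψ (ae_of_all _ hψ0)]
  simp only [hinner]
  rw [lintegral_mul_const' _ _ ENNReal.ofReal_ne_top,
    ← ofReal_integral_eq_lintegral_ofReal hφ (ae_of_all _ hφ0),
    ← ENNReal.ofReal_mul (integral_nonneg hφ0)]

lemma lintegral_lintegral_add_ofReal_mul (T : X → Y → ℝ≥0∞) (hφ : AEMeasurable φ μ)
    (hψ : AEMeasurable ψ ν) (hφ0 : 0 ≤ φ) :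
    ∫⁻ x, ∫⁻ y, (T x y + ENNReal.ofReal (φ x * ψ y)) ∂ν ∂μ =
      (∫⁻ x, ∫⁻ y, T x y ∂ν ∂μ) + ∫⁻ x, ∫⁻ y, ENNReal.ofReal (φ x * ψ y) ∂ν ∂μ := by
  have hinner (x : X) : ∫⁻ y, (T x y + ENNReal.ofReal (φ x * ψ y)) ∂ν =
      ∫⁻ y, T x y ∂ν + ∫⁻ y, ENNReal.ofReal (φ x * ψ y) ∂ν :=
    lintegral_add_right' _ (hψ.const_mul _).ennreal_ofReal
  simp only [hinner]
  refine lintegral_add_right' _ ?_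
  simp only [ENNReal.ofReal_mul (hφ0 _), lintegral_const_mul' _ _ ENNReal.ofReal_ne_top]
  exact hφ.ennreal_ofReal.mul_const _

end IteratedIntegrals

section SingularKernel

variable {S : Type*} [MeasurableSpace S] {μ : Measure S} {α β b : ℝ} {f g : S → ℝ}

/-- The constant `∫ |t|^(-α/2) |t + 1|^(α - 2) dt` to which the integral in `v` of the kernel
`|v|^(-α/2) |u x + v y|^(α - 2)` reduces by scaling. -/
noncomputable def kernelConst (α : ℝ) : ℝ :=
  ∫ t : ℝ, |t| ^ (-(α / 2)) * |t + 1| ^ (α - 2)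

lemma kernelConst_nonneg (α : ℝ) : 0 ≤ kernelConst α :=
  integral_nonneg fun t => by positivity

lemma integral_abs_rpow_mul_kernel {u x y : ℝ} (α : ℝ) (hu : u ≠ 0) (hx : x ≠ 0) (hy : y ≠ 0) :
    ∫ v : ℝ, |v| ^ (-(α / 2)) * |y * v + u * x| ^ (α - 2) * |x * y| =
      kernelConst α * |u| ^ (α / 2 - 1) * |x * y| ^ (α / 2) := by
  have hx' := abs_pos.2 hx
  have hy' := abs_pos.2 hy
  rw [integral_mul_const,
    integral_abs_rpow_mul_abs_mul_add_rpow _ _ hy (mul_ne_zero hu hx), ← kernelConst, neg_neg,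
    show -(α / 2) + (α - 2) + 1 = α / 2 - 1 by ring, abs_mul, abs_mul,
    mul_rpow (abs_nonneg u) hx'.le, mul_rpow hx'.le hy'.le, rpow_sub_one hx'.ne',
    rpow_sub_one hy'.ne']
  field_simp

lemma lintegral_weight_mul_kernel_le (hα1 : 1 < α) (hα2 : α < 2) (hβ : β ≤ α / 2) (hb : 0 < b)
    {u : ℝ} (hu : u ≠ 0) (x y : ℝ) :
    ∫⁻ v, ENNReal.ofReal (weight β b v * (|u * x + v * y| ^ (α - 2) * |x * y|)) ≤
      ENNReal.ofReal (b ^ (β - α / 2) * kernelConst α * |u| ^ (α / 2 - 1) *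
        |x * y| ^ (α / 2)) := by
  rcases eq_or_ne x 0 with rfl | hx
  · simp
  rcases eq_or_ne y 0 with rfl | hy
  · simp
  have hint : Integrable fun v : ℝ =>
      b ^ (β - α / 2) * (|v| ^ (-(α / 2)) * |y * v + u * x| ^ (α - 2) * |x * y|) :=
    ((integrable_abs_rpow_mul_abs_mul_add_rpow (by linarith) (by linarith) (by linarith) hy
      (mul_ne_zero hu hx)).mul_const _).const_mul _
  calc _ ≤ ∫⁻ v, ENNReal.ofReal
        (b ^ (β - α / 2) * (|v| ^ (-(α / 2)) * |y * v + u * x| ^ (α - 2) * |x * y|)) := by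
        refine lintegral_mono_ae ?_
        filter_upwards [Measure.ae_ne volume (0 : ℝ)] with v hv
        rw [add_comm (u * x), mul_comm v y, mul_assoc, ← mul_assoc (b ^ _)]
        gcongr
        exact weight_le_rpow_mul_abs_rpow hβ (by linarith) hb hv
    _ = _ := by
        rw [← ofReal_integral_eq_lintegral_ofReal hint (ae_of_all _ fun v => by positivity),
          integral_const_mul, integral_abs_rpow_mul_kernel α hu hx hy]
        ring_nf

lemma ofReal_abs_mixedKernel_le (α : ℝ) (μ : Measure S) (f g : S → ℝ) (u v : ℝ) :
    ENNReal.ofReal |mixedKernel α μ f g u v| ≤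
      ∫⁻ s, ENNReal.ofReal (|u * f s + v * g s| ^ (α - 2) * |f s * g s|) ∂μ := by
  have hnorm := enorm_integral_le_lintegral_enorm (μ := μ)
    fun s => |u * f s + v * g s| ^ (α - 2) * (f s * g s)
  simpa only [mixedKernel, ← ofReal_norm, Real.norm_eq_abs, abs_mul, abs_abs,
    abs_of_nonneg (rpow_nonneg (abs_nonneg _) (α - 2))] using hnorm

lemma aemeasurable_weight_mul_kernel [SFinite μ] (α β b u : ℝ) (hf : AEStronglyMeasurable f μ)
    (hg : AEStronglyMeasurable g μ) :
    AEMeasurable (fun p : ℝ × S => ENNReal.ofReal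
      (weight β b p.1 * (|u * f p.2 + p.1 * g p.2| ^ (α - 2) * |f p.2 * g p.2|)))
      (volume.prod μ) := by
  have hf' := hf.aemeasurable.comp_snd (μ := (volume : Measure ℝ))
  have hg' := hg.aemeasurable.comp_snd (μ := (volume : Measure ℝ))
  have hw : Measurable fun p : ℝ × S => weight β b p.1 :=
    (measurable_weight β b).comp measurable_fst
  have hkernel := ((hf'.const_mul u).add (measurable_fst.aemeasurable.mul hg')).abs.pow_const
    (α - 2)
  exact (hw.aemeasurable.mul (hkernel.mul (hf'.mul hg').abs)).ennreal_ofReal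

lemma lintegral_weight_mul_mixedKernel_le [SFinite μ] (hα1 : 1 < α) (hα2 : α < 2)
    (hβ : β ≤ α / 2) (hb : 0 < b) (hf : MemLalpha α μ f) (hg : MemLalpha α μ g) {u : ℝ}
    (hu : u ≠ 0) :
    ∫⁻ v, ENNReal.ofReal (weight β b v * |mixedKernel α μ f g u v|) ≤
      ENNReal.ofReal (b ^ (β - α / 2) * kernelConst α * |u| ^ (α / 2 - 1) * dep2 α μ f g) := by
  have hk := kernelConst_nonneg α
  calc ∫⁻ v, ENNReal.ofReal (weight β b v * |mixedKernel α μ f g u v|)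
      ≤ ∫⁻ v : ℝ, ∫⁻ s, ENNReal.ofReal
          (weight β b v * (|u * f s + v * g s| ^ (α - 2) * |f s * g s|)) ∂μ := by
        gcongr with v
        simp only [ENNReal.ofReal_mul (weight_nonneg β hb v)]
        rw [lintegral_const_mul' _ _ ENNReal.ofReal_ne_top]
        gcongr
        exact ofReal_abs_mixedKernel_le α μ f g u v
    _ = ∫⁻ s, (∫⁻ v, ENNReal.ofReal
          (weight β b v * (|u * f s + v * g s| ^ (α - 2) * |f s * g s|))) ∂μ :=
        lintegral_lintegral_swap (aemeasurable_weight_mul_kernel α β b u hf.1 hg.1)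
    _ ≤ ∫⁻ s, ENNReal.ofReal (b ^ (β - α / 2) * kernelConst α * |u| ^ (α / 2 - 1) *
          |f s * g s| ^ (α / 2)) ∂μ := by
        gcongr with s
        exact lintegral_weight_mul_kernel_le hα1 hα2 hβ hb hu (f s) (g s)
    _ = _ := by
        rw [dep2, ← integral_const_mul, ofReal_integral_eq_lintegral_ofReal
          ((integrable_dep2 (by linarith) hf hg).const_mul _) (ae_of_all _ fun s => by positivity)]

/-- The constant in the bound for the double integral of the singular part of `D2`. -/
noncomputable def singularConst (α β : ℝ) : ℝ :=
  kernelConst α * ∫ t, brokenPower (-β + (α / 2 - 1)) (-1 + (α / 2 - 1)) t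

lemma singularConst_nonneg (α β : ℝ) : 0 ≤ singularConst α β :=
  mul_nonneg (kernelConst_nonneg α) (integral_nonneg fun _ => brokenPower_nonneg _ _ _)

lemma lintegral_lintegral_mixedKernel_le [SFinite μ] (hα1 : 1 < α) (hα2 : α < 2)
    (hβ : β < α / 2) (hb : 0 < b) (hf : MemLalpha α μ f) (hg : MemLalpha α μ g) :
    ∫⁻ u, ∫⁻ v, ENNReal.ofReal (|mixedKernel α μ f g u v| * weight β b u * weight β b v) ≤
      ENNReal.ofReal (singularConst α β * b ^ (2 * β - α) * dep2 α μ f g) := by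
  have hk := kernelConst_nonneg α
  have hd := dep2_nonneg α μ f g
  have hK : 0 ≤ b ^ (β - α / 2) * kernelConst α * dep2 α μ f g := by positivity
  have hw := weight_nonneg β hb
  calc _ ≤ ∫⁻ u, ENNReal.ofReal (b ^ (β - α / 2) * kernelConst α * dep2 α μ f g *
          (weight β b u * |u| ^ (α / 2 - 1))) := by
        refine lintegral_mono_ae ?_
        filter_upwards [Measure.ae_ne volume (0 : ℝ)] with u hu
        calc _ = ENNReal.ofReal (weight β b u) *
              ∫⁻ v, ENNReal.ofReal (weight β b v * |mixedKernel α μ f g u v|) := by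
              rw [← lintegral_const_mul' _ _ ENNReal.ofReal_ne_top]
              congr with v
              rw [← ENNReal.ofReal_mul (hw u)]
              ring_nf
          _ ≤ _ := by
              grw [lintegral_weight_mul_mixedKernel_le hα1 hα2 hβ.le hb hf hg hu]
              rw [← ENNReal.ofReal_mul (hw u)]
              apply le_of_eq
              ring_nf
    _ = ENNReal.ofReal (b ^ (β - α / 2) * kernelConst α * dep2 α μ f g *
          (b ^ (β - α / 2) * ∫ t, brokenPower (-β + (α / 2 - 1)) (-1 + (α / 2 - 1)) t)) := by
        rw [← ofReal_integral_eq_lintegral_ofReal ((integrable_weight_mul_abs_rpow (by linarith)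
            (by linarith) hb).const_mul _)
            (ae_of_all _ fun u => mul_nonneg hK (mul_nonneg (hw u) (by positivity))),
          integral_const_mul, integral_weight_mul_abs_rpow β _ hb, sub_sub, add_sub_cancel]
    _ = _ := by
        rw [singularConst, show 2 * β - α = β - α / 2 + (β - α / 2) by ring, rpow_add hb]
        ring_nf

end SingularKernel

section DoubleIntegrals

variable {S : Type*} [MeasurableSpace S] {μ : Measure S} {α β b c P : ℝ} {f g : S → ℝ}

/-- The constant in the bound for the double integral of `D1`. -/
noncomputable def constD1 (α β c P : ℝ) : ℝ :=
  α * (2 + 10 * P) * envelopeConst c 2 * (4 / (1 - β) + 2) * π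

/-- The constant in the bound for the double integral of `D2`. -/
noncomputable def constD2 (α β c P : ℝ) : ℝ :=
  α * (α - 1) * singularConst α β +
    α ^ 2 * (8 * P + 20 * P ^ 2) * envelopeConst c 3 *
      (∫ u : ℝ, |u| ^ (-(α / 2)) * (1 + u ^ 2)⁻¹) ^ 2

namespace NondegeneratePair

lemma lintegral_lintegral_D1_le (hα1 : 1 < α) (hα2 : α ≤ 2) (hβ : β < 1) (hc : 0 < c)
    (hb : 1 ≤ b) (H : NondegeneratePair α c P μ f g) :
    ∫⁻ u, ∫⁻ v, ENNReal.ofReal (|D1 α μ f g u v| * weight β b u) ≤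
      ENNReal.ofReal (constD1 α β c P * b ^ (β - 1) * log (b + 1) *
        (dep1s α μ g f + dep2 α μ f g)) := by
  have hb0 : 0 < b := by linarith
  have hw := weight_nonneg β hb0
  have hP := H.bound_nonneg (by linarith : α ≠ 0)
  set K := α * (2 + 10 * P) * envelopeConst c 2 * (dep1s α μ g f + dep2 α μ f g) with hK
  have hK0 : 0 ≤ K := by
    have := envelopeConst_nonneg c 2
    have := dep1s_nonneg α μ g f
    have := dep2_nonneg α μ f g
    positivity
  calc _ ≤ ∫⁻ u, ∫⁻ v, ENNReal.ofReal
        (K * (weight β b u * (1 + u ^ 2)⁻¹) * (1 + v ^ 2)⁻¹) := by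
        refine lintegral_mono fun u => lintegral_mono fun v => ENNReal.ofReal_le_ofReal ?_
        refine (mul_le_mul_of_nonneg_right (H.abs_D1_le hα1 hα2 hc u v) (hw u)).trans_eq ?_
        ring
    _ = ENNReal.ofReal (K * (∫ u, weight β b u * (1 + u ^ 2)⁻¹) * π) := by
        rw [lintegral_lintegral_ofReal_mul
          ((integrable_weight_mul_inv_one_add_sq hβ hb0).const_mul K) integrable_inv_one_add_sq
          (fun u => mul_nonneg hK0 (mul_nonneg (hw u) (by positivity))) fun v => by positivity,
          integral_const_mul, integral_univ_inv_one_add_sq]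
    _ ≤ ENNReal.ofReal (K * ((4 / (1 - β) + 2) * (b ^ (β - 1) * log (b + 1))) * π) := by
        gcongr
        exact integral_weight_mul_inv_one_add_sq_le_log hβ hb
    _ = _ := by
        rw [constD1, hK]
        ring_nf

end NondegeneratePair

lemma lintegral_lintegral_weight_mul_inv_one_add_sq_le (hα0 : 0 ≤ α) (hα2 : α < 2)
    (hβ : β ≤ α / 2) (hb : 0 < b) {K : ℝ} (hK : 0 ≤ K) :
    ∫⁻ u, ∫⁻ v, ENNReal.ofReal
        (K * (weight β b u * (1 + u ^ 2)⁻¹) * (weight β b v * (1 + v ^ 2)⁻¹)) ≤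
      ENNReal.ofReal (K * (∫ u : ℝ, |u| ^ (-(α / 2)) * (1 + u ^ 2)⁻¹) ^ 2 * b ^ (2 * β - α)) := by
  have hw0 (u : ℝ) : 0 ≤ weight β b u * (1 + u ^ 2)⁻¹ :=
    mul_nonneg (weight_nonneg β hb u) (by positivity)
  have hint := integrable_weight_mul_inv_one_add_sq (by linarith : β < 1) hb
  have hI0 : 0 ≤ ∫ u, weight β b u * (1 + u ^ 2)⁻¹ := integral_nonneg hw0
  have hle := integral_weight_mul_inv_one_add_sq_le hβ (by linarith) (by linarith) hb
  rw [lintegral_lintegral_ofReal_mul (hint.const_mul K) hint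
    (fun u => mul_nonneg hK (hw0 u)) hw0, integral_const_mul, mul_assoc, ← sq]
  grw [hle]
  rw [show 2 * β - α = β - α / 2 + (β - α / 2) by ring, rpow_add hb]
  exact le_of_eq (by ring_nf)

namespace NondegeneratePair

lemma ofReal_abs_D2_mul_weight_le (hα1 : 1 < α) (hα2 : α ≤ 2) (hc : 0 < c) (hb : 0 < b)
    (H : NondegeneratePair α c P μ f g) (u v : ℝ) :
    ENNReal.ofReal (|D2 α μ f g u v| * weight β b u * weight β b v) ≤
      ENNReal.ofReal (α * (α - 1)) *
        ENNReal.ofReal (|mixedKernel α μ f g u v| * weight β b u * weight β b v) +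
      ENNReal.ofReal (α ^ 2 * (8 * P + 20 * P ^ 2) * envelopeConst c 3 *
        (dep1 α μ f g + dep2 α μ f g) * (weight β b u * (1 + u ^ 2)⁻¹) *
        (weight β b v * (1 + v ^ 2)⁻¹)) := by
  have hw := weight_nonneg β hb
  have hα0 : 0 ≤ α * (α - 1) := mul_nonneg (by linarith) (by linarith)
  rw [← ENNReal.ofReal_mul hα0]
  refine (ENNReal.ofReal_le_ofReal ?_).trans ENNReal.ofReal_add_le
  rw [mul_assoc]
  refine (mul_le_mul_of_nonneg_right (H.abs_D2_le hα1 hα2 hc u v)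
    (mul_nonneg (hw u) (hw v))).trans_eq ?_
  ring

lemma lintegral_lintegral_D2_le [SFinite μ] (hα1 : 1 < α) (hα2 : α < 2) (hβ : β < α / 2)
    (hc : 0 < c) (hb : 0 < b) (H : NondegeneratePair α c P μ f g) :
    ∫⁻ u, ∫⁻ v, ENNReal.ofReal (|D2 α μ f g u v| * weight β b u * weight β b v) ≤
      ENNReal.ofReal (constD2 α β c P * b ^ (2 * β - α) * (dep1 α μ f g + dep2 α μ f g)) := by
  have hP := H.bound_nonneg (by linarith : α ≠ 0)
  have ha := dep1_nonneg α μ f g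
  have hd := dep2_nonneg α μ f g
  have hα0 : 0 ≤ α * (α - 1) := mul_nonneg (by linarith) (by linarith)
  have hsing := singularConst_nonneg α β
  set K := α ^ 2 * (8 * P + 20 * P ^ 2) * envelopeConst c 3 * (dep1 α μ f g + dep2 α μ f g) with hK
  have hK0 : 0 ≤ K := by
    have := envelopeConst_nonneg c 3
    positivity
  have hmeas : Measurable fun u => weight β b u * (1 + u ^ 2)⁻¹ := by
    have := measurable_weight β b
    fun_prop
  calc _ ≤ ∫⁻ u, ∫⁻ v, (ENNReal.ofReal (α * (α - 1)) *
          ENNReal.ofReal (|mixedKernel α μ f g u v| * weight β b u * weight β b v) +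
        ENNReal.ofReal
          (K * (weight β b u * (1 + u ^ 2)⁻¹) * (weight β b v * (1 + v ^ 2)⁻¹))) := by
        gcongr with u v
        exact H.ofReal_abs_D2_mul_weight_le hα1 hα2.le hc hb u v
    _ ≤ ENNReal.ofReal (α * (α - 1)) * ENNReal.ofReal
          (singularConst α β * b ^ (2 * β - α) * (dep1 α μ f g + dep2 α μ f g)) +
        ENNReal.ofReal (K * (∫ u : ℝ, |u| ^ (-(α / 2)) * (1 + u ^ 2)⁻¹) ^ 2 * b ^ (2 * β - α)) := by
        rw [lintegral_lintegral_add_ofReal_mul _ (hmeas.const_mul K).aemeasurable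
          hmeas.aemeasurable fun u =>
            mul_nonneg hK0 (mul_nonneg (weight_nonneg β hb u) (by positivity))]
        simp only [lintegral_const_mul' _ _ ENNReal.ofReal_ne_top]
        grw [lintegral_lintegral_mixedKernel_le hα1 hα2 hβ hb H.memLalpha_left H.memLalpha_right,
          lintegral_lintegral_weight_mul_inv_one_add_sq_le (by linarith) hα2 hβ.le hb hK0,
          ← le_add_of_nonneg_left ha]
    _ = _ := by
        rw [← ENNReal.ofReal_mul hα0, ← ENNReal.ofReal_add (by positivity) (by positivity),
          constD2, hK]
        ring_nf

end NondegeneratePair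

end DoubleIntegrals

theorem stmt10_general {α β ε₂ nf ng : ℝ} (hα1 : 1 < α) (hα2 : α < 2) (hβ : β < α / 2)
    (hε₂ : 0 < ε₂) (hnf : 0 < nf) (hng : 0 < ng) :
    ∃ C > (0 : ℝ), ∀ (S : Type*) [MeasurableSpace S] (μ : Measure S) [SFinite μ]
      (f g : S → ℝ), MemLalpha α μ f → MemLalpha α μ g →
      nrm α μ f = nf → nrm α μ g = ng → A2 α ε₂ μ f g →
      ∀ b : ℝ, 1 ≤ b →
        (∫⁻ u : ℝ, ∫⁻ v : ℝ, ENNReal.ofReal (|D1 α μ f g u v| * weight β b u)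
          ≤ ENNReal.ofReal (C * b ^ (β - 1) * log (b + 1) *
              (dep1s α μ g f + dep2 α μ f g))) ∧
        (∫⁻ u : ℝ, ∫⁻ v : ℝ, ENNReal.ofReal (|D2 α μ f g u v| * weight β b u * weight β b v)
          ≤ ENNReal.ofReal (C * b ^ (2 * β - α) * (dep1 α μ f g + dep2 α μ f g))) := by
  obtain ⟨C, hC⟩ := exists_gt (max 0 (max
    (constD1 α β (ε₂ * min (nf ^ α) (ng ^ α)) (nf ^ α + ng ^ α))
    (constD2 α β (ε₂ * min (nf ^ α) (ng ^ α)) (nf ^ α + ng ^ α))))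
  obtain ⟨hC0, hC1, hC2⟩ : _ ∧ _ ∧ _ := by simpa only [max_lt_iff] using hC
  refine ⟨C, hC0, ?_⟩
  rintro S _ μ _ f g hf hg rfl rfl hA2 b hb
  have H := hA2.nondegeneratePair hε₂.le hf hg
  have hc : 0 < ε₂ * min (nrm α μ f ^ α) (nrm α μ g ^ α) := by positivity
  have hlog : 0 ≤ log (b + 1) := log_nonneg (by linarith)
  have hdep1s := add_nonneg (dep1s_nonneg α μ g f) (dep2_nonneg α μ f g)
  have hdep1 := add_nonneg (dep1_nonneg α μ f g) (dep2_nonneg α μ f g)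
  constructor
  · grw [H.lintegral_lintegral_D1_le hα1 hα2.le (by linarith) hc hb, hC1]
  · grw [H.lintegral_lintegral_D2_le hα1 hα2 hβ hc (by linarith), hC2]

/-- Paper's Lemma 3.5. -/
theorem stmt10 (α β ε₁ ε₂ nf ng : ℝ) (hα1 : 1 < α) (hα2 : α < 2)
    (hβ0 : 0 < β) (hβ : β < α / 2) (hε₁ : 0 < ε₁) (hε₂ : 0 < ε₂)
    (hnf : 0 < nf) (hng : 0 < ng) :
    ∃ C > (0:ℝ), ∀ (S : Type) [MeasurableSpace S] (μ : Measure S) [SigmaFinite μ]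
      (f g : S → ℝ), MemLalpha α μ f → MemLalpha α μ g →
      nrm α μ f = nf → nrm α μ g = ng → A1 α ε₁ μ f g → A2 α ε₂ μ f g →
      ∀ b : ℝ, 1 ≤ b →
        (∫⁻ u : ℝ, ∫⁻ v : ℝ, ENNReal.ofReal (|D1 α μ f g u v| *
            (if |u| < 1 / b then |u| ^ (-β) else b ^ (β - 1) * |u|⁻¹))
          ≤ ENNReal.ofReal (C * b ^ (β - 1) * Real.log (b + 1) *
              (dep1s α μ g f + dep2 α μ f g))) ∧
        (∫⁻ u : ℝ, ∫⁻ v : ℝ, ENNReal.ofReal (|D2 α μ f g u v| *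
            (if |u| < 1 / b then |u| ^ (-β) else b ^ (β - 1) * |u|⁻¹) *
            (if |v| < 1 / b then |v| ^ (-β) else b ^ (β - 1) * |v|⁻¹))
          ≤ ENNReal.ofReal (C * b ^ (2 * β - α) *
              (dep1 α μ f g + dep2 α μ f g))) := by
  obtain ⟨C, hC, h⟩ := stmt10_general hα1 hα2 hβ hε₂ hnf hng
  exact ⟨C, hC, fun S _ μ _ f g hf hg hnf hng _ => h S μ f g hf hg hnf hng⟩
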